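/- Let p ∈ 𝓗 in 2 variables be nonconstant of degree d. Then d ≤ 2·N(p) − 3. -/

import Mathlib

/-!
Split `p` into its homogeneous parts `pᵢ` and write `p - 1 = (x + y - 1) q`; the homogeneous parts
`qⱼ` of `q` satisfy `qⱼ₊₁ = (x + y) qⱼ - pⱼ₊₁`, with `q₀ = 1 - p₀` and `q_d = 0`.  Substituting
`y = -1` gives univariate polynomials (`row` for `pᵢ`, `quot` for `qⱼ`) with
`quot (j+1) = (X - 1) * quot j - row (j+1)`, and sign changes in the coefficient sequence of
`quot j` are counted.

* Multiplication of a nonzero polynomial by `X - 1` creates at least one further sign change, which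
  is the key step in Descartes' rule of signs (`HasAlt.mul_X_sub_one`).
* Altering one coefficient destroys at most two sign changes (`HasAlt.sub_monomial`).
* A polynomial with `k` monomials has at most `k - 1` sign changes (`HasAlt.lt_card`).

Nonnegativity of the coefficients of `p` is only used to see that `quot j ≠ 0` for `j < d`
(`quot_ne_zero`).  If `k` is the number of monomials of degree `d`, then `(X - 1) * quot (d-1)`,
which equals `row d`, was produced with `d` multiplications by `X - 1` and `N(p) - k` altered
coefficients, so `d - 2 (N(p) - k) ≤ k - 1`.  It is also a nonzero multiple of `X - 1`, so it has a
sign change and `k ≥ 2`.  Hence `d ≤ 2 N(p) - k - 1 ≤ 2 N(p) - 3`.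
-/

open MvPolynomial

/-- `𝓗`: polynomials with nonnegative coefficients that are `1`
on the hyperplane `x₁ + ⋯ + xₙ = 1`. -/
def InH (n : ℕ) (p : MvPolynomial (Fin n) ℝ) : Prop :=
  (∀ α : Fin n →₀ ℕ, 0 ≤ p.coeff α) ∧
  ∀ x : Fin n → ℝ, (∑ i, x i) = 1 → eval x p = 1

/-- `N(p)`: the number of monomials of `p` with nonzero coefficient. -/
def Nmon {n : ℕ} (p : MvPolynomial (Fin n) ℝ) : ℕ := p.support.card

/-- The coefficient sequence of `f` has at least `m` sign changes: there are `m + 1` increasing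
indices `i 0 < ⋯ < i m` at which the coefficients of `f` are nonzero with alternating signs.
Only the sign of `ε` matters; values of `i` beyond `m` are irrelevant. -/
def HasAlt (f : Polynomial ℝ) (m : ℕ) : Prop :=
  ∃ (i : ℕ → ℕ) (ε : ℝ), (∀ t < m, i t < i (t + 1)) ∧
    ∀ t ≤ m, 0 < ε * (-1) ^ t * f.coeff (i t)

lemma HasAlt.of_ne_zero {f : Polynomial ℝ} (hf : f ≠ 0) : HasAlt f 0 := by
  refine ⟨fun _ => f.natDegree, f.leadingCoeff, by simp, fun t ht => ?_⟩
  obtain rfl : t = 0 := by omega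
  have : f.leadingCoeff ≠ 0 := by simpa using hf
  simpa using mul_self_pos.2 this

lemma HasAlt.lt_of_lt {m : ℕ} {i : ℕ → ℕ} (hi : ∀ t < m, i t < i (t + 1)) {s t : ℕ}
    (hst : s < t) (ht : t ≤ m) : i s < i t := by
  induction t, hst using Nat.le_induction with
  | base => exact hi s (by omega)
  | succ t hst ih => exact (ih (by omega)).trans (hi t (by omega))

lemma HasAlt.lt_card {f : Polynomial ℝ} {m : ℕ} (h : HasAlt f m) : m < f.support.card := by
  obtain ⟨i, ε, hi, hs⟩ := h
  have : (Finset.range (m + 1)).card ≤ f.support.card := by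
    apply Finset.card_le_card_of_injOn i
    · intro t ht
      have ht' : t ≤ m := by simpa [Nat.lt_succ_iff] using ht
      simp only [Finset.mem_coe, Polynomial.mem_support_iff]
      intro h0
      have := hs t ht'
      simp [h0] at this
    · intro s hs' t ht' hst
      simp only [Finset.coe_range, Set.mem_Iio] at hs' ht'
      by_contra hne
      rcases lt_or_gt_of_ne hne with h | h
      · have := HasAlt.lt_of_lt hi h (by omega); omega
      · have := HasAlt.lt_of_lt hi h (by omega); omega
  simpa using this

/-- Altering one coefficient destroys at most two sign changes: the affected index is dropped from
the alternating sequence together with its successor. -/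
lemma HasAlt.sub_monomial {f : Polynomial ℝ} {m : ℕ} (h : HasAlt f (m + 2)) (n : ℕ) (a : ℝ) :
    HasAlt (f - Polynomial.monomial n a) m := by
  obtain ⟨i, ε, hi, hs⟩ := h
  -- `s` is the position of `n` in the sequence; if `n` does not occur, any `s > m` will do
  obtain ⟨s, hs'⟩ : ∃ s, ∀ t ≤ m + 2, t ≠ s → t ≤ m ∨ s ≤ m → i t ≠ n := by
    by_cases hn : ∃ s ≤ m + 2, i s = n
    · obtain ⟨s, hsm, rfl⟩ := hn
      refine ⟨s, fun t ht hts _ => ?_⟩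
      rcases lt_or_gt_of_ne hts with h | h
      · exact (HasAlt.lt_of_lt hi h hsm).ne
      · exact (HasAlt.lt_of_lt hi h ht).ne'
    · push Not at hn
      exact ⟨m + 3, fun t ht _ _ => hn t ht⟩
  refine ⟨fun t => if t < s then i t else i (t + 2), ε, fun t ht => ?_, fun t ht => ?_⟩
  · dsimp only
    split_ifs
    · exact hi t (by omega)
    · exact HasAlt.lt_of_lt hi (by omega) (by omega)
    · omega
    · exact hi (t + 2) (by omega)
  · dsimp only
    split_ifs with hts
    · have h1 := hs' t (by omega) (by omega) (by omega)
      rw [Polynomial.coeff_sub, Polynomial.coeff_monomial, if_neg h1.symm, sub_zero]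
      exact hs t (by omega)
    · have h1 := hs' (t + 2) (by omega) (by omega) (by omega)
      rw [Polynomial.coeff_sub, Polynomial.coeff_monomial, if_neg h1.symm, sub_zero]
      have := hs (t + 2) (by omega)
      simpa [pow_add] using this

lemma HasAlt.sub_sum {ι : Type*} {f : Polynomial ℝ} (S : Finset ι) (e : ι → ℕ) (a : ι → ℝ) :
    ∀ {m : ℕ}, HasAlt f (m + 2 * S.card) →
      HasAlt (f - ∑ α ∈ S, Polynomial.monomial (e α) (a α)) m := by
  classical
  induction S using Finset.induction_on with
  | empty => intro m h; simpa using h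
  | insert α S hα ih =>
    intro m h
    rw [Finset.card_insert_of_notMem hα] at h
    have h1 : HasAlt f (m + 2 + 2 * S.card) := by convert h using 1; ring
    rw [Finset.sum_insert hα, add_comm, ← sub_sub]
    exact (ih h1).sub_monomial _ _

/-- The coefficients of `f` are, up to sign, the partial sums of those of `(X - 1) * f`. -/
lemma sum_coeff_X_sub_one_mul (f : Polynomial ℝ) (n : ℕ) :
    ∑ k ∈ Finset.range (n + 1), ((Polynomial.X - 1) * f).coeff k = -f.coeff n := by
  induction n with
  | zero => simp [sub_mul]
  | succ n ih =>
    rw [Finset.sum_range_succ, ih, sub_mul, one_mul, Polynomial.coeff_sub,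
      Polynomial.coeff_X_mul]
    ring

/-- If the coefficients of `g` over the block `a ≤ k < b` have a sum with the sign of `δ`, then one
of them has that sign. -/
lemma exists_coeff_pos {g : Polynomial ℝ} {δ : ℝ} {a b : ℕ}
    (h : 0 < δ * ∑ k ∈ Finset.Ico a b, g.coeff k) :
    ∃ k, a ≤ k ∧ k < b ∧ 0 < δ * g.coeff k := by
  rw [Finset.mul_sum] at h
  obtain ⟨k, hk, hpos⟩ := Finset.exists_lt_of_sum_lt (s := Finset.Ico a b) (f := fun _ => (0 : ℝ))
    (g := fun k => δ * g.coeff k) (by simpa using h)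
  rw [Finset.mem_Ico] at hk
  exact ⟨k, hk.1, hk.2, hpos⟩

/-- Multiplication by `X - 1` creates a sign change.  Given alternating indices `i 0 < ⋯ < i m` for
`f`, the coefficients of `(X - 1) * f` sum over the `m + 2` blocks `[0, i 0]`, `(i 0, i 1]`, …,
`(i m, ∞)` to values of alternating signs, so each block contributes one index. -/
lemma HasAlt.mul_X_sub_one {f : Polynomial ℝ} {m : ℕ} (h : HasAlt f m) :
    HasAlt ((Polynomial.X - 1) * f) (m + 1) := by
  obtain ⟨i, ε, hi, hs⟩ := h
  set g := (Polynomial.X - 1) * f with hg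
  -- block `t` is `[l t, l (t + 1))`; the last one ends beyond every index occurring in `f`
  let l : ℕ → ℕ := fun t => if t = 0 then 0 else if t ≤ m + 1 then i (t - 1) + 1
    else i m + f.natDegree + 2
  have hsum : ∀ a b, a ≤ b → ∑ k ∈ Finset.Ico (a + 1) (b + 1), g.coeff k =
      f.coeff a - f.coeff b := fun a b hab => by
    rw [Finset.sum_Ico_eq_sub _ (by omega), sum_coeff_X_sub_one_mul, sum_coeff_X_sub_one_mul]
    ring
  have key : ∀ t, ∃ k, t ≤ m + 1 →
      l t ≤ k ∧ k < l (t + 1) ∧ 0 < -ε * (-1) ^ t * g.coeff k := by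
    intro t
    by_cases ht : t ≤ m + 1
    swap
    · exact ⟨0, fun h => absurd h ht⟩
    suffices h : 0 < -ε * (-1) ^ t * ∑ k ∈ Finset.Ico (l t) (l (t + 1)), g.coeff k by
      obtain ⟨k, hk⟩ := exists_coeff_pos h
      exact ⟨k, fun _ => hk⟩
    rcases Nat.eq_zero_or_pos t with rfl | ht0
    · have := hs 0 (by omega)
      have e : ∑ k ∈ Finset.Ico (l 0) (l (0 + 1)), g.coeff k = -f.coeff (i 0) := by
        simp only [l, if_true]
        simp [← sum_coeff_X_sub_one_mul, hg]
      rw [e]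
      linarith
    obtain ⟨t, rfl⟩ : ∃ u, t = u + 1 := ⟨t - 1, by omega⟩
    have h1 := hs t (by omega)
    have h3 : -ε * (-1) ^ (t + 1) = ε * (-1) ^ t := by ring
    rw [h3]
    rcases Nat.lt_or_ge t m with htm | htm
    · have h2 := hs (t + 1) (by omega)
      have e : ∑ k ∈ Finset.Ico (l (t + 1)) (l (t + 1 + 1)), g.coeff k =
          f.coeff (i t) - f.coeff (i (t + 1)) := by
        rw [← hsum _ _ (hi t htm).le]
        simp [l, htm, ht]
      rw [e]
      rw [pow_succ] at h2
      linarith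
    · obtain rfl : t = m := by omega
      have e : ∑ k ∈ Finset.Ico (l (t + 1)) (l (t + 1 + 1)), g.coeff k = f.coeff (i t) := by
        have h0 : f.coeff (i t + f.natDegree + 1) = 0 :=
          Polynomial.coeff_eq_zero_of_natDegree_lt (by omega)
        have := hsum (i t) (i t + f.natDegree + 1) (by omega)
        rw [h0, sub_zero] at this
        rw [← this]
        simp [l]
      rw [e]
      exact h1
  choose k hk using key
  refine ⟨k, -ε, fun t ht => ?_, fun t ht => (hk t ht).2.2⟩
  exact (hk t (by omega)).2.1.trans_le (hk (t + 1) (by omega)).1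

/-- The exponents of the monomials of `p` of degree `i`. -/
noncomputable def level (p : MvPolynomial (Fin 2) ℝ) (i : ℕ) : Finset (Fin 2 →₀ ℕ) :=
  p.support.filter fun α => α 0 + α 1 = i

/-- The homogeneous part of `p` of degree `i`, evaluated at `(X, -1)`. -/
noncomputable def row (p : MvPolynomial (Fin 2) ℝ) (i : ℕ) : Polynomial ℝ :=
  ∑ α ∈ level p i, Polynomial.monomial (α 0) (p.coeff α * (-1) ^ α 1)

/-- The homogeneous part of degree `j` of `(p - 1) / (x + y - 1)`, evaluated at `(X, -1)`.  It is
given by its recursion, so that no division is needed. -/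
noncomputable def quot (p : MvPolynomial (Fin 2) ℝ) : ℕ → Polynomial ℝ
  | 0 => 1 - row p 0
  | j + 1 => (Polynomial.X - 1) * quot p j - row p (j + 1)

lemma quot_add_sum (p : MvPolynomial (Fin 2) ℝ) (j : ℕ) :
    quot p j + ∑ i ∈ Finset.range (j + 1), (Polynomial.X - 1) ^ (j - i) * row p i =
      (Polynomial.X - 1) ^ j := by
  induction j with
  | zero => simp [quot]
  | succ j ih =>
    rw [Finset.sum_range_succ, quot, pow_succ', ← ih, mul_add, Finset.mul_sum]
    have : ∀ i ∈ Finset.range (j + 1), (Polynomial.X - 1) ^ (j + 1 - i) * row p i =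
        (Polynomial.X - 1) * ((Polynomial.X - 1) ^ (j - i) * row p i) := by
      intro i hi
      rw [Finset.mem_range] at hi
      rw [show j + 1 - i = (j - i) + 1 by omega, pow_succ']
      ring
    rw [Finset.sum_congr rfl this]
    simp

lemma row_eval (p : MvPolynomial (Fin 2) ℝ) (i : ℕ) (x : ℝ) :
    (row p i).eval x = ∑ α ∈ level p i, p.coeff α * (-1) ^ α 1 * x ^ α 0 := by
  simp [row, Polynomial.eval_finsetSum]

lemma degree_le (p : MvPolynomial (Fin 2) ℝ) {α : Fin 2 →₀ ℕ} (hα : α ∈ p.support) :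
    α 0 + α 1 ≤ p.totalDegree := by
  have := le_totalDegree hα
  rwa [Finsupp.sum_fintype _ _ (by simp), Fin.sum_univ_two] at this

/-- Summation over the monomials of `p` may be organised by degree. -/
lemma sum_level (p : MvPolynomial (Fin 2) ℝ) {M : Type*} [AddCommMonoid M]
    (F : (Fin 2 →₀ ℕ) → M) :
    ∑ i ∈ Finset.range (p.totalDegree + 1), ∑ α ∈ level p i, F α = ∑ α ∈ p.support, F α := by
  apply Finset.sum_fiberwise_of_maps_to
  intro α hα
  have := degree_le p hα
  simp only [Finset.mem_range]
  omega

/-- For `x ≠ 1` the point `(x, -1) / (x - 1)` lies on the line, and clearing denominators in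
`p = 1` there gives this homogeneous form of the hypothesis. -/
lemma sum_row_eq {p : MvPolynomial (Fin 2) ℝ} (hp : InH 2 p) :
    ∑ i ∈ Finset.range (p.totalDegree + 1), (Polynomial.X - 1) ^ (p.totalDegree - i) * row p i =
      (Polynomial.X - 1) ^ p.totalDegree := by
  set d := p.totalDegree with hd
  apply Polynomial.eq_of_infinite_eval_eq
  apply Set.Infinite.mono (s := {x : ℝ | x ≠ 1}) _ (Set.finite_singleton (1 : ℝ)).infinite_compl
  intro x hx
  have hx0 : x - 1 ≠ 0 := sub_ne_zero.2 hx
  have h1 := hp.2 ![x / (x - 1), -1 / (x - 1)] (by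
    simp only [Fin.sum_univ_two, Matrix.cons_val_zero, Matrix.cons_val_one]
    field_simp
    ring)
  rw [eval_eq'] at h1
  simp only [Fin.prod_univ_two, Matrix.cons_val_zero, Matrix.cons_val_one] at h1
  rw [Set.mem_ofPred_eq, Polynomial.eval_finsetSum]
  simp only [Polynomial.eval_mul, Polynomial.eval_pow, Polynomial.eval_sub, Polynomial.eval_X,
    Polynomial.eval_one, row_eval]
  rw [← sum_level] at h1
  refine Eq.trans ?_ ((congrArg (fun y => (x - 1) ^ d * y) h1).trans (mul_one _))
  rw [Finset.mul_sum]
  refine Finset.sum_congr rfl fun i hi => ?_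
  rw [Finset.mul_sum, Finset.mul_sum]
  refine Finset.sum_congr rfl fun α hα => ?_
  have hα' : α 0 + α 1 = i := (Finset.mem_filter.1 hα).2
  have hid : i ≤ d := by
    rw [Finset.mem_range] at hi
    omega
  have hpow : (x - 1) ^ d = (x - 1) ^ (d - i) * ((x - 1) ^ α 0 * (x - 1) ^ α 1) := by
    rw [← pow_add, ← pow_add]
    congr 1
    omega
  rw [hpow, div_pow, div_pow]
  field_simp

lemma quot_totalDegree {p : MvPolynomial (Fin 2) ℝ} (hp : InH 2 p) :
    quot p p.totalDegree = 0 := by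
  have := quot_add_sum p p.totalDegree
  rwa [sum_row_eq hp, add_eq_right] at this

lemma exists_mem_level {p : MvPolynomial (Fin 2) ℝ} (hp : p ≠ 0) :
    (level p p.totalDegree).Nonempty := by
  obtain ⟨α, hα, h⟩ := Finset.exists_mem_eq_sup p.support
    (support_nonempty.2 hp) fun s => s.sum fun _ e => e
  refine ⟨α, Finset.mem_filter.2 ⟨hα, ?_⟩⟩
  rw [totalDegree, h, Finsupp.sum_fintype _ _ (by simp), Fin.sum_univ_two]

/-- The value of a row at `-1` is, up to a global sign, the sum of the (nonnegative) coefficients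
of that homogeneous part. -/
lemma row_eval_neg_one (p : MvPolynomial (Fin 2) ℝ) (i : ℕ) :
    (row p i).eval (-1) = (-1) ^ i * ∑ α ∈ level p i, p.coeff α := by
  rw [row_eval, Finset.mul_sum]
  refine Finset.sum_congr rfl fun α hα => ?_
  rw [← (Finset.mem_filter.1 hα).2, pow_add]
  ring

/-- If `quot p j` vanished for some `j < d`, the homogeneous parts of degree `> j` would contribute
nothing to the identity `sum_row_eq`; but at `X = -1` all its terms have the same sign, and the one
of degree `d` is nonzero. -/
lemma quot_ne_zero {p : MvPolynomial (Fin 2) ℝ} (hp : InH 2 p) {j : ℕ}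
    (hj : j < p.totalDegree) : quot p j ≠ 0 := by
  intro h0
  set d := p.totalDegree with hd
  have hp0 : p ≠ 0 := by
    rintro rfl
    simp [hd] at hj
  -- the sum of the coefficients of degree `i`, weighted by `2 ^ (d - i)`
  let w : ℕ → ℝ := fun i => 2 ^ (d - i) * ∑ α ∈ level p i, p.coeff α
  have hw : ∀ i ≤ d, ((Polynomial.X - 1) ^ (d - i) * row p i).eval (-1) = (-1) ^ d * w i := by
    intro i hi
    have e : ((-1 : ℝ)) ^ d = (-1) ^ (d - i) * (-1) ^ i := by rw [← pow_add]; congr 1; omega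
    have e2 : ((-1 : ℝ) - 1) ^ (d - i) = (-1) ^ (d - i) * 2 ^ (d - i) := by
      rw [← mul_pow]; norm_num
    simp only [Polynomial.eval_mul, Polynomial.eval_pow, Polynomial.eval_sub, Polynomial.eval_X,
      Polynomial.eval_one, row_eval_neg_one, w]
    rw [e, e2]
    ring
  have h1 := congrArg (fun f => ((Polynomial.X - 1) ^ (d - j) * f).eval (-1)) (quot_add_sum p j)
  have h2 := congrArg (Polynomial.eval (-1)) (sum_row_eq hp)
  have hle : ∑ i ∈ Finset.range (d + 1), w i = ∑ i ∈ Finset.range (j + 1), w i := by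
    have hd' : (Polynomial.X - 1 : Polynomial ℝ) ^ (d - j) * (Polynomial.X - 1) ^ j =
        (Polynomial.X - 1) ^ d := by rw [← pow_add]; congr 1; omega
    simp only [h0, zero_add, hd', Finset.mul_sum] at h1
    rw [← h2, Polynomial.eval_finsetSum, Polynomial.eval_finsetSum] at h1
    have e1 : ∀ i ∈ Finset.range (j + 1), Polynomial.eval (-1)
        ((Polynomial.X - 1) ^ (d - j) * ((Polynomial.X - 1) ^ (j - i) * row p i)) =
        (-1) ^ d * w i := by
      intro i hi
      rw [Finset.mem_range] at hi
      rw [← hw i (by omega), ← mul_assoc, ← pow_add]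
      congr 4
      omega
    have e2 : ∀ i ∈ Finset.range (d + 1), Polynomial.eval (-1)
        ((Polynomial.X - 1) ^ (d - i) * row p i) = (-1) ^ d * w i := fun i hi =>
      hw i (by rw [Finset.mem_range] at hi; omega)
    rw [Finset.sum_congr rfl e1, Finset.sum_congr rfl e2, ← Finset.mul_sum, ← Finset.mul_sum] at h1
    exact (mul_left_cancel₀ (by simp) h1).symm
  refine absurd hle (ne_of_gt ?_)
  refine Finset.sum_lt_sum_of_subset (i := d) (Finset.range_mono (by omega)) (by simp)
    (by simp; omega) ?_ ?_
  · refine mul_pos (by positivity) (Finset.sum_pos (fun α hα => ?_) (exists_mem_level hp0))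
    exact lt_of_le_of_ne (hp.1 α) (mem_support_iff.1 (Finset.mem_filter.1 hα).1).symm
  · exact fun i _ _ => mul_nonneg (by positivity) (Finset.sum_nonneg fun α _ => hp.1 α)

/-- Subtracting a row costs at most two sign changes per monomial; the bound stays meaningful when
it is negative, because the result is nonzero. -/
lemma HasAlt.sub_row {f : Polynomial ℝ} {m : ℕ} (h : HasAlt f m) (p : MvPolynomial (Fin 2) ℝ)
    (i : ℕ) (hne : f - row p i ≠ 0) :
    ∃ m', HasAlt (f - row p i) m' ∧ m ≤ m' + 2 * (level p i).card := by
  rcases le_or_gt (2 * (level p i).card) m with hle | hlt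
  · refine ⟨m - 2 * (level p i).card, HasAlt.sub_sum _ _ _ ?_, by omega⟩
    rwa [Nat.sub_add_cancel hle]
  · exact ⟨0, .of_ne_zero hne, by omega⟩

lemma exists_hasAlt_quot {p : MvPolynomial (Fin 2) ℝ} (hp : InH 2 p) (j : ℕ)
    (hj : j < p.totalDegree) :
    ∃ m, HasAlt (quot p j) m ∧ j ≤ m + 2 * ∑ i ∈ Finset.range (j + 1), (level p i).card := by
  induction j with
  | zero =>
    exact ⟨0, .of_ne_zero (quot_ne_zero hp hj), by omega⟩
  | succ j ih =>
    obtain ⟨m, hm, hjm⟩ := ih (by omega)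
    obtain ⟨m', hm', hle⟩ := hm.mul_X_sub_one.sub_row p (j + 1) (quot_ne_zero hp hj)
    refine ⟨m', hm', ?_⟩
    rw [Finset.sum_range_succ]
    omega

lemma card_support_row_le (p : MvPolynomial (Fin 2) ℝ) (i : ℕ) :
    (row p i).support.card ≤ (level p i).card := by
  classical
  refine (Finset.card_le_card (t := (level p i).image fun α => α 0) fun n hn => ?_).trans
    Finset.card_image_le
  by_contra hcon
  simp only [Finset.mem_image, not_exists, not_and] at hcon
  refine Polynomial.mem_support_iff.1 hn ?_
  rw [row, Polynomial.finsetSum_coeff]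
  exact Finset.sum_eq_zero fun α hα => by
    rw [Polynomial.coeff_monomial, if_neg (hcon α hα)]

/-- for nonconstant `p ∈ 𝓗` in 2 variables of degree `d`,
`d ≤ 2·N(p) − 3` (stated without truncated subtraction as `d + 3 ≤ 2·N(p)`). -/
theorem stmt1 (p : MvPolynomial (Fin 2) ℝ) (hp : InH 2 p)
    (hnc : p.totalDegree ≠ 0) (d : ℕ) (hd : p.totalDegree = d) :
    d + 3 ≤ 2 * Nmon p := by
  obtain ⟨e, rfl⟩ : ∃ e, d = e + 1 := ⟨d - 1, by omega⟩
  obtain ⟨m, hm, hle⟩ := exists_hasAlt_quot hp e (by omega)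
  have hq := quot_totalDegree hp
  rw [hd, quot, sub_eq_zero] at hq
  have hcard := hm.mul_X_sub_one.lt_card
  rw [hq] at hcard
  have hk := card_support_row_le p (e + 1)
  have hN : ∑ i ∈ Finset.range (e + 1 + 1), (level p i).card = Nmon p := by
    have := sum_level p (fun _ => 1)
    simp only [← Finset.card_eq_sum_ones, hd] at this
    exact this
  rw [Finset.sum_range_succ] at hN
  omega
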